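/- Fix a day j. Let E, P, T be finite sets and W a nonempty finite set; let x : P × E → ℕ with x_{p,e} ∈ {0,1} and Σ_{p∈P} x_{p,e} = 1 for each e ∈ E; let r : P → ℕ with r_p ∈ {0,1}, b : P → ℕ with b_p = 1 − r_p, q : E → ℝ with 0 ≤ q_e ≤ 1, o ∈ ℕ, a : W × T → ℕ with a_{w,t} ∈ {0,1}, and d : T → ℕ. Set N = |E| − o − Σ_{e∈E} Σ_{p∈P} b_p · x_{p,e} and Q = Σ_{e∈E} q_e · Σ_{p∈P} r_p · x_{p,e}, let ε be real with 0 < ε ≤ 1, and assume ⌈Q⌉ − Q ≤ 1 − ε and the coverage constraint Σ_{e∈E} (1 − q_e) · Σ_{p∈P} r_p · x_{p,e} ≥ o. Then there exist v : W → ℕ and y, z : T → ℕ such that Σ_{w∈W} v_w ≤ N − Q, Σ_{w∈W} v_w ≥ N − Q − (1 − ε), and for every t ∈ T, Σ_{w∈W} a_{w,t} · v_w + y_t = d_t + z_t. -/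

import Mathlib

/-!
Each employee follows exactly one pattern, so the planned days off and the planned work add up to
the number of employees. Hence `N - Q` is the expected number of employees present minus `o`, which
the coverage constraint makes nonnegative. As `N` is an integer, `⌈Q⌉ ≤ N`, so `N - ⌈Q⌉` employees
can be put on a single duty; this loses at most `⌈Q⌉ - Q` against `N - Q`. Understaffing and
overstaffing absorb any remaining imbalance.
-/

section Pattern

variable {ιE ιP R : Type*} {E : Finset ιE} {P : Finset ιP} {x : ιP × ιE → R} {r b : ιP → R}

theorem sum_sum_mul_add_sum_sum_mul_eq_card [NonAssocSemiring R]
    (hx : ∀ e ∈ E, ∑ p ∈ P, x (p, e) = 1) (hbr : ∀ p ∈ P, b p + r p = 1) :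
    ∑ e ∈ E, ∑ p ∈ P, b p * x (p, e) + ∑ e ∈ E, ∑ p ∈ P, r p * x (p, e) = E.card := by
  have employee_total : ∀ e ∈ E, ∑ p ∈ P, b p * x (p, e) + ∑ p ∈ P, r p * x (p, e) = 1 := by
    intro e he
    rw [← hx e he, ← Finset.sum_add_distrib]
    exact Finset.sum_congr rfl fun p hp ↦ by rw [← add_mul, hbr p hp, one_mul]
  rw [← Finset.sum_add_distrib, Finset.sum_congr rfl employee_total, Finset.sum_const,
    nsmul_one]

theorem expected_absences_le_of_coverage [Ring R] [PartialOrder R] [IsOrderedAddMonoid R]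
    (hx : ∀ e ∈ E, ∑ p ∈ P, x (p, e) = 1) (hbr : ∀ p ∈ P, b p + r p = 1)
    {q : ιE → R} {o : R} (hcov : o ≤ ∑ e ∈ E, (1 - q e) * ∑ p ∈ P, r p * x (p, e)) :
    ∑ e ∈ E, q e * ∑ p ∈ P, r p * x (p, e) ≤
      E.card - o - ∑ e ∈ E, ∑ p ∈ P, b p * x (p, e) :=
  calc
    ∑ e ∈ E, q e * ∑ p ∈ P, r p * x (p, e)
      = ∑ e ∈ E, ∑ p ∈ P, r p * x (p, e) - ∑ e ∈ E, (1 - q e) * ∑ p ∈ P, r p * x (p, e) := by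
        simp only [sub_mul, one_mul, Finset.sum_sub_distrib, sub_sub_cancel]
    _ ≤ ∑ e ∈ E, ∑ p ∈ P, r p * x (p, e) - o := sub_le_sub_left hcov _
    _ = E.card - o - ∑ e ∈ E, ∑ p ∈ P, b p * x (p, e) := by
        rw [← sum_sum_mul_add_sum_sum_mul_eq_card hx hbr]
        abel

end Pattern

theorem exists_nat_mem_Icc_of_ceil_sub_le {R : Type*} [Ring R] [LinearOrder R]
    [IsStrictOrderedRing R] [FloorRing R] {N : ℤ} {Q δ : R} (hQN : Q ≤ N)
    (hδ : (⌈Q⌉ : R) - Q ≤ δ) : ∃ k : ℕ, (k : R) ∈ Set.Icc (N - Q - δ) (N - Q) := by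
  obtain ⟨k, hk⟩ := Int.eq_ofNat_of_zero_le (sub_nonneg.mpr (Int.ceil_le.mpr hQN))
  have hkR : (k : R) = N - ⌈Q⌉ := by exact_mod_cast congrArg (Int.cast (R := R)) hk.symm
  refine ⟨k, ?_⟩
  rw [hkR, sub_sub]
  exact ⟨sub_le_sub_left (sub_le_iff_le_add'.mp hδ) _, sub_le_sub_left (Int.le_ceil Q) _⟩

theorem exists_sum_eq_of_nonempty {ι M : Type*} [AddCommMonoid M] {s : Finset ι}
    (hs : s.Nonempty) (m : M) : ∃ f : ι → M, ∑ i ∈ s, f i = m := by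
  classical
  obtain ⟨i, hi⟩ := hs
  exact ⟨Pi.single i m, by rw [Finset.sum_pi_single', if_pos hi]⟩

theorem stmt_5_general {ιE ιP ιW ιT R : Type*} [Ring R] [LinearOrder R] [IsStrictOrderedRing R]
    [FloorRing R] {E : Finset ιE} {P : Finset ιP} {W : Finset ιW} (hW : W.Nonempty)
    {x : ιP × ιE → R} (hx : ∀ e ∈ E, ∑ p ∈ P, x (p, e) = 1)
    {r b : ιP → R} (hbr : ∀ p ∈ P, b p + r p = 1) {q : ιE → R} {o : R}
    (a : ιW × ιT → ℕ) (d : ιT → ℕ)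
    {N : ℤ} (hN : (N : R) = E.card - o - ∑ e ∈ E, ∑ p ∈ P, b p * x (p, e))
    {Q : R} (hQ : Q = ∑ e ∈ E, q e * ∑ p ∈ P, r p * x (p, e))
    {δ : R} (hδ : (⌈Q⌉ : R) - Q ≤ δ)
    (hcov : o ≤ ∑ e ∈ E, (1 - q e) * ∑ p ∈ P, r p * x (p, e)) :
    ∃ (v : ιW → ℕ) (y z : ιT → ℕ),
      ((∑ w ∈ W, v w : ℕ) : R) ≤ N - Q ∧
      N - Q - δ ≤ ((∑ w ∈ W, v w : ℕ) : R) ∧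
      ∀ t, ∑ w ∈ W, a (w, t) * v w + y t = d t + z t := by
  have hQN : Q ≤ N := by
    rw [hQ, hN]
    exact expected_absences_le_of_coverage hx hbr hcov
  obtain ⟨k, hk_lower, hk_upper⟩ := exists_nat_mem_Icc_of_ceil_sub_le hQN hδ
  obtain ⟨v, rfl⟩ := exists_sum_eq_of_nonempty hW k
  exact ⟨v, d, fun t ↦ ∑ w ∈ W, a (w, t) * v w, hk_upper, hk_lower, fun t ↦ add_comm _ _⟩

/-- Feasibility of the second-stage (recourse) problem: for every first-stage
assignment satisfying constraints (2)-(3) and every demand scenario, there exist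
duty counts `v`, understaffing `y` and overstaffing `z` satisfying constraints
(4), (5) and the demand equation (6). -/
theorem stmt_5 {ιE ιP ιW ιT : Type*} (E : Finset ιE) (P : Finset ιP)
    (W : Finset ιW) (hW : W.Nonempty) (T : Finset ιT)
    (x : ιP × ιE → ℕ) (hx01 : ∀ p ∈ P, ∀ e ∈ E, x (p, e) = 0 ∨ x (p, e) = 1)
    (hxsum : ∀ e ∈ E, ∑ p ∈ P, x (p, e) = 1)
    (r : ιP → ℕ) (hr : ∀ p ∈ P, r p = 0 ∨ r p = 1)
    (b : ιP → ℕ) (hb : ∀ p ∈ P, b p = 1 - r p)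
    (q : ιE → ℝ) (hq : ∀ e ∈ E, 0 ≤ q e ∧ q e ≤ 1)
    (o : ℕ)
    (a : ιW × ιT → ℕ) (ha : ∀ w ∈ W, ∀ t ∈ T, a (w, t) = 0 ∨ a (w, t) = 1)
    (d : ιT → ℕ)
    (N : ℤ) (hN : N = (E.card : ℤ) - (o : ℤ) - ∑ e ∈ E, ∑ p ∈ P, (b p : ℤ) * (x (p, e) : ℤ))
    (Q : ℝ) (hQ : Q = ∑ e ∈ E, q e * ∑ p ∈ P, (r p : ℝ) * (x (p, e) : ℝ))
    (ε : ℝ) (hε0 : 0 < ε) (hε1 : ε ≤ 1) (hfrac : (⌈Q⌉ : ℝ) - Q ≤ 1 - ε)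
    (hcov : ∑ e ∈ E, (1 - q e) * ∑ p ∈ P, (r p : ℝ) * (x (p, e) : ℝ) ≥ (o : ℝ)) :
    ∃ (v : ιW → ℕ) (y z : ιT → ℕ),
      ((∑ w ∈ W, v w : ℕ) : ℝ) ≤ (N : ℝ) - Q ∧
      ((∑ w ∈ W, v w : ℕ) : ℝ) ≥ (N : ℝ) - Q - (1 - ε) ∧
      ∀ t ∈ T, ∑ w ∈ W, a (w, t) * v w + y t = d t + z t := by
  have hbr : ∀ p ∈ P, (b p : ℝ) + r p = 1 := fun p hp ↦ mod_cast (by grind : b p + r p = 1)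
  obtain ⟨v, y, z, h_upper, h_lower, h_demand⟩ := stmt_5_general (x := fun i ↦ (x i : ℝ)) hW
    (mod_cast hxsum) hbr a d (N := N) (by simp [hN]) hQ hfrac hcov
  exact ⟨v, y, z, h_upper, h_lower, fun t _ ↦ h_demand t⟩
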